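/- Let N ≥ 2 and p ≥ 0 be integers and q = exp(2πiτ) for τ ∈ H₊. Define the Weyl–Kac denominator Π(λ,τ) = q^{(N²−1)/24} ∏_{j<l} ( e^{iπ(λ_j−λ_l)} − e^{iπ(λ_l−λ_j)} ) · ∏_{m=1}^{∞} [ (1−q^m)^{N−1} ∏_{j≠l} (1 − q^m e^{2πi(λ_j−λ_l)}) ] for λ ∈ ℂ^N (the infinite product converges locally uniformly). Then Π^{p+1} is a horizontal section of the KZB connection, i.e. for every λ ∈ ℂ^N with λ_j − λ_l ∉ ℤ+τℤ for all j ≠ l, 4πiN(p+1)·∂_τ (Π(λ,τ)^{p+1}) = ∑_{j=1}^{N} ∂²_{λ_j} (Π(λ,τ)^{p+1}) + 2p(p+1) ∑_{j<l} ∂_tρ(λ_j−λ_l,τ) · Π(λ,τ)^{p+1}. -/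

import Mathlib

open Complex Filter Topology MeasureTheory

noncomputable section

/-- Jacobi's theta function `ϑ₁(t,τ)`. -/
def theta1 (t τ : ℂ) : ℂ :=
  -∑' j : ℤ, Complex.exp ((Real.pi : ℂ) * Complex.I * ((j : ℂ) + 1/2)^2 * τ +
      2 * (Real.pi : ℂ) * Complex.I * ((j : ℂ) + 1/2) * (t + 1/2))

/-- Derivative of `ϑ₁` in the first argument. -/
def theta1' (t τ : ℂ) : ℂ := deriv (fun s => theta1 s τ) t

/-- Membership in the lattice `ℤ + τℤ`. -/
def inLattice (τ t : ℂ) : Prop := ∃ a b : ℤ, t = (a : ℂ) + (b : ℂ) * τ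

/-- The function `σ_w(t,τ)`. -/
def sigmaF (w t τ : ℂ) : ℂ := theta1 (w - t) τ * theta1' 0 τ / (theta1 w τ * theta1 t τ)

/-- The function `ρ(t,τ) = ϑ₁'(t,τ)/ϑ₁(t,τ)`. -/
def rhoF (t τ : ℂ) : ℂ := theta1' t τ / theta1 t τ

/-- The function `E(t,τ) = ϑ₁(t,τ)/ϑ₁'(0,τ)`. -/
def EF (t τ : ℂ) : ℂ := theta1 t τ / theta1' 0 τ

end

noncomputable section

/-- The Weyl–Kac denominator
`Π(λ,τ) = q^{(N²−1)/24} ∏_{j<l}(e^{iπ(λ_j−λ_l)} − e^{iπ(λ_l−λ_j)})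
  ∏_{m=1}^∞ [(1−q^m)^{N−1} ∏_{j≠l}(1−q^m e^{2πi(λ_j−λ_l)})]`, with `q = e^{2πiτ}`
and `q^{(N²−1)/24} := exp(2πiτ(N²−1)/24)`. -/
def WeylKac (N : ℕ) (lam : Fin N → ℂ) (τ : ℂ) : ℂ :=
  Complex.exp (2 * (Real.pi : ℂ) * Complex.I * τ * ((N ^ 2 - 1 : ℕ) : ℂ) / 24) *
  (∏ j : Fin N, ∏ l ∈ Finset.univ.filter (fun l : Fin N => j < l),
    (Complex.exp ((Real.pi : ℂ) * Complex.I * (lam j - lam l)) -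
      Complex.exp ((Real.pi : ℂ) * Complex.I * (lam l - lam j)))) *
  ∏' k : ℕ,
    ((1 - Complex.exp (2 * (Real.pi : ℂ) * Complex.I * τ) ^ (k + 1)) ^ (N - 1) *
      ∏ j : Fin N, ∏ l ∈ Finset.univ.filter (fun l : Fin N => l ≠ j),
        (1 - Complex.exp (2 * (Real.pi : ℂ) * Complex.I * τ) ^ (k + 1) *
          Complex.exp (2 * (Real.pi : ℂ) * Complex.I * (lam j - lam l))))

end

/-!
By the Jacobi triple product, `Π = η ^ (N - 1) ∏_{j<l} iϑ₁(λ_j - λ_l) / η`. Hence the logarithmic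
derivative of `Π` in `λ_j` is `∑_l ρ(λ_j - λ_l)`, while the heat equation `4πi ∂_τ ϑ₁ = ϑ₁''` and
`ϑ₁'(0) = 2πη³` express its logarithmic derivative in `τ` through `∑_{j<l} (ρ² + ρ')(λ_j - λ_l)`
and the constant `C = ϑ₁'''(0) / ϑ₁'(0)`. The two are related by the identity
`(ρ(u) + ρ(v) + ρ(w))² + ρ'(u) + ρ'(v) + ρ'(w) = C` for `u + v + w = 0`, which follows from
Liouville's theorem for elliptic functions: summed over all triples of indices it yields
`4πiN ∂_τ log Π = ∑_j (∑_l ρ(λ_j - λ_l))² + ∑_{j≠l} ρ'(λ_j - λ_l)`. With this, both sides of the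
claim equal `(p + 1)² Π^{p+1}` times the right-hand side.
-/

noncomputable section

section ThetaSeries

open scoped Real

/-- The angular frequency `2πi(j + 1/2)` of the `j`-th term of the series of `ϑ₁`. -/
def theta1Freq (j : ℤ) : ℂ := 2 * π * I * (j + 1 / 2)

/-- The `j`-th term of the series of `-ϑ₁`. -/
def theta1Term (j : ℤ) (t τ : ℂ) : ℂ :=
  cexp (π * I * (j + 1 / 2) ^ 2 * τ + 2 * π * I * (j + 1 / 2) * (t + 1 / 2))

/-- The `k`-th derivative of `ϑ₁` in its first argument, as a termwise differentiated series. -/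
def theta1Deriv (k : ℕ) (t τ : ℂ) : ℂ := -∑' j : ℤ, theta1Freq j ^ k * theta1Term j t τ

variable {t τ : ℂ}

lemma theta1Deriv_zero (t τ : ℂ) : theta1Deriv 0 t τ = theta1 t τ := by
  simp only [theta1Deriv, theta1, theta1Term, pow_zero, one_mul]

lemma norm_theta1Freq (j : ℤ) : ‖theta1Freq j‖ = 2 * π * |(j : ℝ) + 1 / 2| := by
  have : theta1Freq j = ((2 * π * ((j : ℝ) + 1 / 2) : ℝ) : ℂ) * I := by
    rw [theta1Freq]; push_cast; ring
  rw [this, norm_mul, norm_I, mul_one, norm_real, Real.norm_eq_abs, abs_mul,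
    abs_of_pos Real.two_pi_pos]

lemma norm_theta1Term (j : ℤ) (t τ : ℂ) :
    ‖theta1Term j t τ‖ =
      Real.exp (-π * (((j : ℝ) + 1 / 2) ^ 2 * τ.im + 2 * ((j : ℝ) + 1 / 2) * t.im)) := by
  have : π * I * (j + 1 / 2) ^ 2 * τ + 2 * π * I * (j + 1 / 2) * (t + 1 / 2) =
      ((π * ((j : ℝ) + 1 / 2) ^ 2 : ℝ) : ℂ) * (I * τ) +
        ((2 * π * ((j : ℝ) + 1 / 2) : ℝ) : ℂ) * (I * (t + 1 / 2)) := by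
    push_cast; ring
  rw [theta1Term, norm_exp, this, add_re, re_ofReal_mul, re_ofReal_mul]
  congr 1
  simp only [mul_re, I_re, I_im, add_im, div_ofNat_im, one_im]
  ring

lemma norm_theta1Freq_pow_mul_theta1Term_le (k : ℕ) {S T : ℝ} (hT : 0 < T) (ht : |t.im| ≤ S)
    (hτ : T ≤ τ.im) (j : ℤ) :
    ‖theta1Freq j ^ k * theta1Term j t τ‖ ≤
      (2 * π) ^ k * Real.exp (2 * π * S ^ 2 / T) *
        HurwitzKernelBounds.f_int k (1 / 2) (T / 2) j := by
  set x : ℝ := j + 1 / 2 with hx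
  have cross_term : -(2 * x * t.im) ≤ 2 * |x| * S := by
    calc -(2 * x * t.im) ≤ |2 * x * t.im| := neg_le_abs _
      _ = 2 * |x| * |t.im| := by rw [abs_mul, abs_mul, abs_two]
      _ ≤ 2 * |x| * S := by gcongr
  have am_gm : 2 * |x| * S ≤ x ^ 2 * (T / 2) + 2 * S ^ 2 / T := by
    have : x ^ 2 * (T / 2) + 2 * S ^ 2 / T - 2 * |x| * S = (|x| * T - 2 * S) ^ 2 / (2 * T) := by
      rw [← sq_abs x]; field_simp; ring
    have : 0 ≤ (|x| * T - 2 * S) ^ 2 / (2 * T) := by positivity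
    linarith
  have quadratic : x ^ 2 * T ≤ x ^ 2 * τ.im := by gcongr
  have exponent : -π * (x ^ 2 * τ.im + 2 * x * t.im) ≤
      2 * π * S ^ 2 / T + -π * x ^ 2 * (T / 2) := by
    calc -π * (x ^ 2 * τ.im + 2 * x * t.im) = π * -(x ^ 2 * τ.im + 2 * x * t.im) := by ring
      _ ≤ π * (2 * S ^ 2 / T - x ^ 2 * (T / 2)) := by gcongr; linarith
      _ = _ := by ring
  rw [norm_mul, norm_pow, norm_theta1Freq, norm_theta1Term, ← hx, mul_pow,
    HurwitzKernelBounds.f_int, ← hx]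
  calc (2 * π) ^ k * |x| ^ k * Real.exp (-π * (x ^ 2 * τ.im + 2 * x * t.im))
      ≤ (2 * π) ^ k * |x| ^ k * Real.exp (2 * π * S ^ 2 / T + -π * x ^ 2 * (T / 2)) := by gcongr
    _ = _ := by rw [Real.exp_add]; ring

lemma summable_theta1Deriv_bound (k : ℕ) (S : ℝ) {T : ℝ} (hT : 0 < T) :
    Summable fun j : ℤ ↦ (2 * π) ^ k * Real.exp (2 * π * S ^ 2 / T) *
      HurwitzKernelBounds.f_int k (1 / 2) (T / 2) j :=
  (HurwitzKernelBounds.summable_f_int k (1 / 2) (half_pos hT)).mul_left _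

lemma summable_theta1Deriv (k : ℕ) (t : ℂ) (hτ : 0 < τ.im) :
    Summable fun j ↦ theta1Freq j ^ k * theta1Term j t τ :=
  .of_norm_bounded (summable_theta1Deriv_bound k |t.im| hτ)
    (norm_theta1Freq_pow_mul_theta1Term_le k hτ le_rfl le_rfl)

lemma hasDerivAt_theta1Term (j : ℤ) (t τ : ℂ) :
    HasDerivAt (theta1Term j · τ) (theta1Freq j * theta1Term j t τ) t := by
  have := (((hasDerivAt_id t).add_const (1 / 2)).const_mul (theta1Freq j)).const_add
    (π * I * (j + 1 / 2) ^ 2 * τ)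
  refine this.cexp.congr_deriv ?_
  rw [mul_one, mul_comm]
  rfl

lemma hasDerivAt_theta1Term_tau (j : ℤ) (t τ : ℂ) :
    HasDerivAt (theta1Term j t) (theta1Freq j ^ 2 * theta1Term j t τ / (4 * π * I)) τ := by
  have := ((hasDerivAt_id τ).const_mul (π * I * (j + 1 / 2) ^ 2)).add_const
    (2 * π * I * (j + 1 / 2) * (t + 1 / 2))
  refine this.cexp.congr_deriv ?_
  simp only [theta1Term, theta1Freq, id]
  field_simp
  ring

lemma hasDerivAt_theta1Deriv (k : ℕ) (t : ℂ) (hτ : 0 < τ.im) :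
    HasDerivAt (theta1Deriv k · τ) (theta1Deriv (k + 1) t τ) t := by
  have abs_im_le {z : ℂ} (hz : z ∈ Metric.ball t 1) : |z.im| ≤ |t.im| + 1 := by
    have := (abs_im_le_norm (z - t)).trans (mem_ball_iff_norm.mp hz).le
    rw [sub_im] at this
    linarith [abs_sub_abs_le_abs_sub z.im t.im]
  have mem : t ∈ Metric.ball t 1 := Metric.mem_ball_self one_pos
  suffices HasDerivAt (fun z ↦ ∑' j, theta1Freq j ^ k * theta1Term j z τ)
      (∑' j, theta1Freq j ^ (k + 1) * theta1Term j t τ) t from this.neg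
  refine hasDerivAt_tsum_of_isPreconnected
    (g' := fun j z ↦ theta1Freq j ^ (k + 1) * theta1Term j z τ)
    (summable_theta1Deriv_bound (k + 1) (|t.im| + 1) hτ) Metric.isOpen_ball
    (convex_ball t 1).isPreconnected (fun j z _ ↦ ?_) (fun j z hz ↦ ?_)
    mem (summable_theta1Deriv k t hτ) mem
  · refine ((hasDerivAt_theta1Term j z τ).const_mul (theta1Freq j ^ k)).congr_deriv ?_
    rw [pow_succ, mul_assoc]
  · exact norm_theta1Freq_pow_mul_theta1Term_le (k + 1) hτ (abs_im_le hz) le_rfl j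

lemma hasDerivAt_theta1Deriv_tau (k : ℕ) (t : ℂ) (hτ : 0 < τ.im) :
    HasDerivAt (theta1Deriv k t) (theta1Deriv (k + 2) t τ / (4 * π * I)) τ := by
  have mem : τ ∈ {z : ℂ | τ.im / 2 < z.im} := half_lt_self hτ
  have := (hasDerivAt_tsum_of_isPreconnected
    ((summable_theta1Deriv_bound (k + 2) |t.im| (half_pos hτ)).div_const ‖4 * π * I‖)
    (isOpen_lt continuous_const continuous_im)
    (convex_halfSpace_im_gt (τ.im / 2)).isPreconnected (fun j z _ ↦
      (hasDerivAt_theta1Term_tau j t z).const_mul (theta1Freq j ^ k)) (fun j z hz ↦ ?_)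
    mem (summable_theta1Deriv k t hτ) mem).neg
  · refine this.congr_deriv ?_
    simp only [theta1Deriv, neg_div, ← tsum_div_const, pow_add, mul_div_assoc, mul_assoc]
  · rw [← mul_div_assoc, ← mul_assoc, ← pow_add, norm_div]
    gcongr
    exact norm_theta1Freq_pow_mul_theta1Term_le (k + 2) (half_pos hτ) le_rfl (le_of_lt hz) j

lemma theta1'_eq_theta1Deriv (t : ℂ) (hτ : 0 < τ.im) : theta1' t τ = theta1Deriv 1 t τ := by
  simp only [theta1', ← theta1Deriv_zero, (hasDerivAt_theta1Deriv 0 t hτ).deriv]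

lemma cexp_theta1Freq (j : ℤ) : cexp (theta1Freq j) = -1 := by
  rw [theta1Freq, show 2 * π * I * (j + 1 / 2) = π * I + j * (2 * π * I) by ring, exp_add,
    exp_int_mul_two_pi_mul_I, exp_pi_mul_I, mul_one]

lemma theta1Freq_neg_one_sub (j : ℤ) : theta1Freq (-1 - j) = -theta1Freq j := by
  rw [theta1Freq, theta1Freq]; push_cast; ring

lemma theta1Term_add_one (j : ℤ) (t τ : ℂ) : theta1Term j (t + 1) τ = -theta1Term j t τ := by
  rw [theta1Term, theta1Term, ← neg_one_mul, ← cexp_theta1Freq j, theta1Freq, ← exp_add]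
  ring_nf

lemma theta1Term_add_tau (j : ℤ) (t τ : ℂ) :
    theta1Term j (t + τ) τ = -cexp (-(π * I * τ) - 2 * π * I * t) * theta1Term (j + 1) t τ := by
  rw [theta1Term, theta1Term, ← neg_one_mul, ← cexp_theta1Freq (-1), theta1Freq, ← exp_add,
    ← exp_add]
  congr 1; push_cast; ring

lemma theta1Term_neg (j : ℤ) (t τ : ℂ) : theta1Term j (-t) τ = -theta1Term (-1 - j) t τ := by
  rw [theta1Term, theta1Term, ← neg_one_mul (cexp _), ← cexp_theta1Freq j, theta1Freq, ← exp_add]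
  congr 1; push_cast; ring

lemma theta1Deriv_add_one (k : ℕ) (t τ : ℂ) :
    theta1Deriv k (t + 1) τ = -theta1Deriv k t τ := by
  simp only [theta1Deriv, theta1Term_add_one, mul_neg, tsum_neg]

lemma theta1Deriv_neg (k : ℕ) (t τ : ℂ) :
    theta1Deriv k (-t) τ = (-1) ^ (k + 1) * theta1Deriv k t τ := by
  have term (j : ℤ) : theta1Freq j ^ k * theta1Term j (-t) τ =
      (-1) ^ (k + 1) * (theta1Freq (-1 - j) ^ k * theta1Term (-1 - j) t τ) := by
    rw [theta1Term_neg, theta1Freq_neg_one_sub, neg_pow (theta1Freq j), pow_succ,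
      show (-1 : ℂ) ^ k * -1 * ((-1) ^ k * theta1Freq j ^ k * theta1Term (-1 - j) t τ) =
        ((-1) ^ k * (-1) ^ k) * (theta1Freq j ^ k * -theta1Term (-1 - j) t τ) by ring,
      ← mul_pow, neg_one_mul, neg_neg, one_pow, one_mul]
  simp only [theta1Deriv, term, tsum_mul_left, mul_neg]
  congr 2
  exact (Equiv.subLeft (-1 : ℤ)).tsum_eq fun j ↦ theta1Freq j ^ k * theta1Term j t τ

lemma theta1Deriv_apply_zero_of_even {k : ℕ} (hk : Even k) (τ : ℂ) : theta1Deriv k 0 τ = 0 := by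
  have := theta1Deriv_neg k 0 τ
  rwa [neg_zero, hk.add_one.neg_one_pow, neg_one_mul, self_eq_neg] at this

end ThetaSeries

section TripleProduct

/-- The finite `q`-Pochhammer symbol `(q; q)_n`. -/
def qPochhammer (q : ℂ) (n : ℕ) : ℂ := ∏ m ∈ Finset.range n, (1 - q ^ (m + 1))

/-- The reciprocal `1 / (q; q)_m`, extended by `0` to negative `m`. -/
def qPochhammerInv (q : ℂ) (m : ℤ) : ℂ := if m < 0 then 0 else (qPochhammer q m.toNat)⁻¹

/-- The Gaussian binomial coefficient `[2n choose n + k]_q`, which is `0` unless `|k| ≤ n`. -/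
def centralQBinom (q : ℂ) (n : ℕ) (k : ℤ) : ℂ :=
  qPochhammer q (2 * n) * qPochhammerInv q (n - k) * qPochhammerInv q (n + k)

variable {q x : ℂ} {a : ℤ → ℂ}

lemma one_sub_pow_succ_ne_zero (hq : ‖q‖ < 1) (n : ℕ) : 1 - q ^ (n + 1) ≠ 0 := by
  refine sub_ne_zero.mpr fun h ↦ ?_
  have := pow_lt_one₀ (norm_nonneg q) hq n.succ_ne_zero
  rw [← norm_pow, ← h, norm_one] at this
  exact this.false

lemma qPochhammer_succ (q : ℂ) (n : ℕ) :
    qPochhammer q (n + 1) = qPochhammer q n * (1 - q ^ (n + 1)) :=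
  Finset.prod_range_succ _ n

lemma qPochhammerInv_natCast (q : ℂ) (n : ℕ) : qPochhammerInv q n = (qPochhammer q n)⁻¹ := by
  rw [qPochhammerInv, if_neg (by lia), Int.toNat_natCast]

lemma qPochhammerInv_eq_mul_succ (hq : ‖q‖ < 1) (m : ℤ) :
    qPochhammerInv q m = (1 - q ^ (m + 1)) * qPochhammerInv q (m + 1) := by
  rcases lt_trichotomy m (-1) with h | rfl | h
  · rw [qPochhammerInv, qPochhammerInv, if_pos (by lia), if_pos (by lia), mul_zero]
  · simp [qPochhammerInv]
  · lift m to ℕ using by lia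
    rw [← Nat.cast_succ, qPochhammerInv_natCast, qPochhammerInv_natCast, zpow_natCast,
      qPochhammer_succ, mul_inv_rev, mul_inv_cancel_left₀ (one_sub_pow_succ_ne_zero hq m)]

lemma centralQBinom_zero (q : ℂ) (k : ℤ) : centralQBinom q 0 k = if k = 0 then 1 else 0 := by
  rcases lt_trichotomy k 0 with h | rfl | h
  · simp [centralQBinom, qPochhammerInv, h, h.ne]
  · simp [centralQBinom, qPochhammerInv, qPochhammer]
  · simp [centralQBinom, qPochhammerInv, h, h.ne']

lemma centralQBinom_succ (hq : ‖q‖ < 1) (hq0 : q ≠ 0) (n : ℕ) (k : ℤ) :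
    centralQBinom q (n + 1) k =
      (1 + q ^ (2 * n + 1)) * centralQBinom q n k +
        q ^ (n + 1 - k : ℤ) * centralQBinom q n (k - 1) +
        q ^ (n + k + 1 : ℤ) * centralQBinom q n (k + 1) := by
  have sub_step := qPochhammerInv_eq_mul_succ hq (n - k)
  have add_step := qPochhammerInv_eq_mul_succ hq (n + k)
  have sub_step' := qPochhammerInv_eq_mul_succ hq (n - (k + 1))
  have add_step' := qPochhammerInv_eq_mul_succ hq (n + (k - 1))
  rw [show (n - (k + 1) + 1 : ℤ) = n - k by ring] at sub_step'
  rw [show (n + (k - 1) + 1 : ℤ) = n + k by ring] at add_step'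
  have numerator : qPochhammer q (2 * (n + 1)) =
      qPochhammer q (2 * n) * (1 - q ^ (2 * n + 1)) * (1 - q ^ (2 * n + 2)) := by
    rw [mul_add, mul_one, qPochhammer_succ, qPochhammer_succ]
  have pow_two_mul : q ^ (2 * n) = q ^ (n - k : ℤ) * q ^ (n + k : ℤ) := by
    rw [← zpow_add₀ hq0, ← zpow_natCast]; congr 1; push_cast; ring
  simp only [centralQBinom, numerator, Nat.cast_succ]
  rw [show (n + 1 - k : ℤ) = n - k + 1 by ring, show (n + 1 + k : ℤ) = n + k + 1 by ring,
    show (n - (k - 1) : ℤ) = n - k + 1 by ring, show (n + (k + 1) : ℤ) = n + k + 1 by ring,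
    add_step', sub_step', add_step, sub_step, pow_add _ _ 1, pow_add _ _ 2, pow_two_mul,
    zpow_add_one₀ hq0, zpow_add_one₀ hq0]
  ring

lemma centralQBinom_succ_mul (hq : ‖q‖ < 1) (hq0 : q ≠ 0) (hx : x ≠ 0)
    (ha : ∀ k, a (k + 1) = -(x * q ^ (k + 1)) * a k) (n : ℕ) (k : ℤ) :
    centralQBinom q (n + 1) k * a k =
      (1 + q ^ (2 * n + 1)) * (centralQBinom q n k * a k) +
        -(q ^ (n + 1) * x) * (centralQBinom q n (k - 1) * a (k - 1)) +
        -(q ^ n * x⁻¹) * (centralQBinom q n (k + 1) * a (k + 1)) := by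
  have prev : a k = -(x * q ^ k) * a (k - 1) := by simpa using ha (k - 1)
  have lower : q ^ (n + 1 - k : ℤ) * q ^ k = q ^ (n + 1) := by
    rw [← zpow_add₀ hq0, sub_add_cancel]; exact_mod_cast zpow_natCast q (n + 1)
  have upper : q ^ (n + k + 1 : ℤ) = q ^ n * q ^ (k + 1) := by
    rw [add_assoc, zpow_add₀ hq0, zpow_natCast]
  rw [centralQBinom_succ hq hq0, ha k, upper, ← lower]
  have : q ^ (n + 1 - k : ℤ) * centralQBinom q n (k - 1) * a k =
      -(q ^ (n + 1 - k : ℤ) * q ^ k * x) * (centralQBinom q n (k - 1) * a (k - 1)) := by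
    rw [prev]; ring
  rw [add_mul, add_mul, this]
  field_simp

lemma hasSum_centralQBinom_mul (hq : ‖q‖ < 1) (hq0 : q ≠ 0) (hx : x ≠ 0)
    (ha : ∀ k, a (k + 1) = -(x * q ^ (k + 1)) * a k) (n : ℕ) :
    HasSum (fun k ↦ centralQBinom q n k * a k)
      (a 0 * ∏ m ∈ Finset.range n, ((1 - q ^ (m + 1) * x) * (1 - q ^ m * x⁻¹))) := by
  induction n with
  | zero =>
    simpa [centralQBinom_zero] using hasSum_single (f := fun k ↦ centralQBinom q 0 k * a k) 0
      fun k hk ↦ by rw [centralQBinom_zero, if_neg hk, zero_mul]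
  | succ n ih =>
    have shift_down := (Equiv.subRight (1 : ℤ)).hasSum_iff.mpr ih
    have shift_up := (Equiv.addRight (1 : ℤ)).hasSum_iff.mpr ih
    convert! ((ih.mul_left (1 + q ^ (2 * n + 1))).add
      (shift_down.mul_left (-(q ^ (n + 1) * x)))).add (shift_up.mul_left (-(q ^ n * x⁻¹))) using 1
    · exact funext (centralQBinom_succ_mul hq hq0 hx ha n)
    · rw [Finset.prod_range_succ, ← mul_assoc]
      generalize a 0 * _ = P
      field_simp
      ring

lemma summable_of_geometric_recurrence (hq : ‖q‖ < 1) (hq0 : q ≠ 0) (hx : x ≠ 0)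
    (ha : ∀ k, a (k + 1) = -(x * q ^ (k + 1)) * a k) : Summable a := by
  have eventually_le (c : ℂ) : ∀ᶠ n : ℕ in atTop, ‖c * q ^ n‖ ≤ 1 / 2 := by
    have := ((tendsto_pow_atTop_nhds_zero_of_norm_lt_one hq).const_mul c).norm
    rw [mul_zero, norm_zero] at this
    exact this.eventually_le_const one_half_pos
  refine .of_nat_of_neg ?_ ?_ <;>
    refine summable_of_ratio_norm_eventually_le (r := 1 / 2) one_half_lt_one ?_
  · filter_upwards [eventually_le (-(x * q))] with n hn
    calc ‖a (n + 1 : ℕ)‖ = ‖-(x * q) * q ^ n‖ * ‖a n‖ := by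
          rw [← norm_mul, Nat.cast_succ, ha, zpow_add_one₀ hq0, zpow_natCast]; ring_nf
      _ ≤ 1 / 2 * ‖a n‖ := by gcongr
  · filter_upwards [eventually_le (-x⁻¹)] with n hn
    have step : a (-(n + 1 : ℕ)) = -x⁻¹ * q ^ n * a (-n) := by
      have := ha (-(n + 1 : ℕ))
      rw [show -((n + 1 : ℕ) : ℤ) + 1 = -n by push_cast; ring, zpow_neg, zpow_natCast] at this
      rw [this]
      field_simp
    calc ‖a (-(n + 1 : ℕ))‖ = ‖-x⁻¹ * q ^ n‖ * ‖a (-n)‖ := by rw [step, norm_mul]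
      _ ≤ 1 / 2 * ‖a (-n)‖ := by gcongr

lemma multipliable_one_sub_pow_mul (hq : ‖q‖ < 1) (x : ℂ) :
    Multipliable fun n : ℕ ↦ 1 - q ^ (n + 1) * x := by
  simp only [sub_eq_add_neg]
  refine multipliable_one_add_of_summable ?_
  simpa using ((summable_nat_add_iff 1).mpr
    (summable_geometric_of_lt_one (norm_nonneg q) hq)).mul_right ‖x‖

lemma tprod_one_sub_pow_mul_ne_zero (hq : ‖q‖ < 1) (hx : ∀ n : ℕ, 1 - q ^ (n + 1) * x ≠ 0) :
    ∏' n : ℕ, (1 - q ^ (n + 1) * x) ≠ 0 := by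
  simp only [sub_eq_add_neg] at hx ⊢
  refine tprod_one_add_ne_zero_of_summable hx ?_
  simpa using ((summable_nat_add_iff 1).mpr
    (summable_geometric_of_lt_one (norm_nonneg q) hq)).mul_right ‖x‖

lemma tprod_one_sub_pow_ne_zero (hq : ‖q‖ < 1) : ∏' n : ℕ, (1 - q ^ (n + 1)) ≠ 0 := by
  simpa using tprod_one_sub_pow_mul_ne_zero (x := 1) hq
    fun n ↦ by simpa using one_sub_pow_succ_ne_zero hq n

lemma tendsto_qPochhammer (hq : ‖q‖ < 1) :
    Tendsto (qPochhammer q) atTop (𝓝 (∏' n : ℕ, (1 - q ^ (n + 1)))) :=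
  (ModularForm.multipliable_one_sub_pow hq).hasProd.tendsto_prod_nat

lemma tendsto_qPochhammerInv (hq : ‖q‖ < 1) :
    Tendsto (qPochhammerInv q) atTop (𝓝 (∏' n : ℕ, (1 - q ^ (n + 1)))⁻¹) := by
  have toNat : Tendsto Int.toNat atTop atTop :=
    tendsto_atTop.mpr fun b ↦ (eventually_ge_atTop (b : ℤ)).mono fun m hm ↦ by lia
  refine (((tendsto_qPochhammer hq).inv₀ (tprod_one_sub_pow_ne_zero hq)).comp toNat).congr' ?_
  filter_upwards [eventually_ge_atTop 0] with m hm
  rw [qPochhammerInv, if_neg hm.not_gt, Function.comp_apply]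

lemma tendsto_centralQBinom (hq : ‖q‖ < 1) (k : ℤ) :
    Tendsto (centralQBinom q · k) atTop (𝓝 (∏' n : ℕ, (1 - q ^ (n + 1)))⁻¹) := by
  have numerator := (tendsto_qPochhammer hq).comp (tendsto_id.const_mul_atTop' two_pos)
  have left := (tendsto_qPochhammerInv hq).comp
    (tendsto_atTop_add_const_right atTop (-k) tendsto_natCast_atTop_atTop)
  have right := (tendsto_qPochhammerInv hq).comp
    (tendsto_atTop_add_const_right atTop k tendsto_natCast_atTop_atTop)
  have := (numerator.mul left).mul right
  rwa [mul_inv_cancel₀ (tprod_one_sub_pow_ne_zero hq), one_mul] at this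

lemma exists_norm_centralQBinom_le (hq : ‖q‖ < 1) : ∃ C, ∀ n k, ‖centralQBinom q n k‖ ≤ C := by
  obtain ⟨A, hA⟩ := (tendsto_qPochhammer hq).norm.bddAbove_range
  obtain ⟨B, hB⟩ :=
    ((tendsto_qPochhammer hq).inv₀ (tprod_one_sub_pow_ne_zero hq)).norm.bddAbove_range
  have hA0 : 0 ≤ A := (norm_nonneg _).trans (hA ⟨0, rfl⟩)
  have hB0 : 0 ≤ B := (norm_nonneg _).trans (hB ⟨0, rfl⟩)
  have inv_le (m : ℤ) : ‖qPochhammerInv q m‖ ≤ B := by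
    rw [qPochhammerInv]
    split_ifs
    · rwa [norm_zero]
    · exact hB ⟨m.toNat, rfl⟩
  refine ⟨A * B * B, fun n k ↦ ?_⟩
  rw [centralQBinom, norm_mul, norm_mul]
  gcongr
  exacts [hA ⟨2 * n, rfl⟩, inv_le _, inv_le _]

lemma tendsto_prod_one_sub_pow_mul (hq : ‖q‖ < 1) (y : ℂ) :
    Tendsto (fun n ↦ ∏ m ∈ Finset.range n, (1 - q ^ m * y)) atTop
      (𝓝 ((∏' n : ℕ, (1 - q ^ (n + 1) * y)) * (1 - y))) := by
  rw [← tendsto_add_atTop_iff_nat 1]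
  refine ((multipliable_one_sub_pow_mul hq y).hasProd.tendsto_prod_nat.mul_const
    (1 - y)).congr fun n ↦ ?_
  rw [Finset.prod_range_succ', pow_zero, one_mul]

/-- The Jacobi triple product: pass to the limit `n → ∞` in its finite version
`hasSum_centralQBinom_mul`. The recurrence says `a k = (-x) ^ k * q ^ (k * (k + 1) / 2) * a 0`. -/
theorem tsum_eq_tripleProduct (hq : ‖q‖ < 1) (hq0 : q ≠ 0) (hx : x ≠ 0)
    (ha : ∀ k, a (k + 1) = -(x * q ^ (k + 1)) * a k) :
    ∑' k, a k = a 0 * (1 - x⁻¹) * (∏' n : ℕ, (1 - q ^ (n + 1))) *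
      (∏' n : ℕ, (1 - q ^ (n + 1) * x)) * ∏' n : ℕ, (1 - q ^ (n + 1) * x⁻¹) := by
  obtain ⟨C, hC⟩ := exists_norm_centralQBinom_le hq
  have sum_tendsto := tendsto_tsum_of_dominated_convergence (bound := fun k ↦ C * ‖a k‖)
    ((summable_of_geometric_recurrence hq hq0 hx ha).norm.mul_left C)
    (fun k ↦ (tendsto_centralQBinom hq k).mul_const (a k))
    (.of_forall fun n k ↦ by rw [norm_mul]; gcongr; exact hC n k)
  have prod_tendsto := ((multipliable_one_sub_pow_mul hq x).hasProd.tendsto_prod_nat.mul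
    (tendsto_prod_one_sub_pow_mul hq x⁻¹)).const_mul (a 0)
  simp only [(hasSum_centralQBinom_mul hq hq0 hx ha _).tsum_eq, tsum_mul_left] at sum_tendsto
  simp only [← Finset.prod_mul_distrib] at prod_tendsto
  have := tendsto_nhds_unique sum_tendsto prod_tendsto
  rw [inv_mul_eq_iff_eq_mul₀ (tprod_one_sub_pow_ne_zero hq)] at this
  rw [this]
  ring

end TripleProduct

section ThetaProduct

open scoped Real ModularForm

/-- The nome `e^{2πiz}`; it is `q` for `z = τ` and the multiplicative variable for `z = t`. -/
def nome (z : ℂ) : ℂ := cexp (2 * π * I * z)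

/-- The infinite product `∏_{n ≥ 1} (1 - qⁿ e^{2πit})`. -/
def nomeProduct (t τ : ℂ) : ℂ := ∏' n : ℕ, (1 - nome τ ^ (n + 1) * nome t)

variable {t τ : ℂ}

lemma nome_ne_zero (z : ℂ) : nome z ≠ 0 := exp_ne_zero _

lemma nome_zero : nome 0 = 1 := by rw [nome, mul_zero, exp_zero]

lemma nome_neg (z : ℂ) : nome (-z) = (nome z)⁻¹ := by rw [nome, nome, mul_neg, exp_neg]

lemma continuous_nome : Continuous nome := by unfold nome; fun_prop

lemma norm_nome_lt_one (hτ : 0 < τ.im) : ‖nome τ‖ < 1 :=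
  UpperHalfPlane.norm_exp_two_pi_I_lt_one ⟨τ, hτ⟩

lemma inLattice_of_nome_pow_mul_nome_eq_one {n : ℕ} (h : nome τ ^ n * nome t = 1) :
    inLattice τ t := by
  rw [nome, nome, ← exp_nat_mul, ← exp_add, exp_eq_one_iff] at h
  obtain ⟨m, hm⟩ := h
  refine ⟨m, -n, mul_left_cancel₀ two_pi_I_ne_zero ?_⟩
  push_cast
  linear_combination hm

lemma inLattice_neg_iff : inLattice τ (-t) ↔ inLattice τ t := by
  constructor <;> rintro ⟨a, b, h⟩ <;> exact ⟨-a, -b, by push_cast; linear_combination -h⟩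

lemma nomeProduct_zero (τ : ℂ) : nomeProduct 0 τ = ∏' n : ℕ, (1 - nome τ ^ (n + 1)) := by
  simp only [nomeProduct, nome_zero, mul_one]

lemma nomeProduct_ne_zero (hτ : 0 < τ.im) (ht : ¬ inLattice τ t) : nomeProduct t τ ≠ 0 :=
  tprod_one_sub_pow_mul_ne_zero (norm_nome_lt_one hτ) fun _ h ↦
    ht (inLattice_of_nome_pow_mul_nome_eq_one (sub_eq_zero.mp h).symm)

lemma nomeProduct_zero_ne_zero (hτ : 0 < τ.im) : nomeProduct 0 τ ≠ 0 := by
  rw [nomeProduct_zero]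
  exact tprod_one_sub_pow_ne_zero (norm_nome_lt_one hτ)

lemma continuous_nomeProduct (hτ : 0 < τ.im) : Continuous (nomeProduct · τ) := by
  refine continuous_iff_continuousAt.mpr fun t ↦ ?_
  simp only [ContinuousAt, nomeProduct, sub_eq_add_neg]
  refine tendsto_tprod_one_add_of_dominated_convergence
    (bound := fun n ↦ ‖nome τ‖ ^ (n + 1) * (‖nome t‖ + 1))
    (((summable_nat_add_iff 1).mpr
      (summable_geometric_of_lt_one (norm_nonneg _) (norm_nome_lt_one hτ))).mul_right _)
    (fun n ↦ ((continuous_nome.tendsto t).const_mul _).neg) ?_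
  filter_upwards [(continuous_nome.norm.tendsto t).eventually_lt_const (lt_add_one _)] with s hs n
  rw [norm_neg, norm_mul, norm_pow]
  gcongr

lemma theta1Term_succ (k : ℤ) (t τ : ℂ) :
    theta1Term (k + 1) t τ = -(nome t * nome τ ^ (k + 1)) * theta1Term k t τ := by
  rw [nome, nome, ← exp_int_mul, ← neg_one_mul (_ * _), ← exp_pi_mul_I, theta1Term, theta1Term,
    ← exp_add, ← exp_add, ← exp_add]
  congr 1; push_cast; ring

lemma theta1Term_zero_mul (t τ : ℂ) :
    theta1Term 0 t τ * (1 - (nome t)⁻¹) =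
      I * (cexp (π * I * τ / 4) * (cexp (π * I * t) - cexp (-(π * I * t)))) := by
  suffices theta1Term 0 t τ * (1 - (nome t)⁻¹) =
      cexp (π / 2 * I) * (cexp (π * I * τ / 4) * (cexp (π * I * t) - cexp (-(π * I * t)))) by
    rwa [exp_pi_div_two_mul_I] at this
  rw [← nome_neg]
  simp only [mul_sub, mul_one, nome, theta1Term, ← exp_add]
  congr 2 <;> · push_cast; ring

theorem I_mul_theta1 (t : ℂ) (hτ : 0 < τ.im) :
    I * theta1 t τ = cexp (π * I * τ / 4) * (cexp (π * I * t) - cexp (-(π * I * t))) *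
      (nomeProduct 0 τ * nomeProduct t τ * nomeProduct (-t) τ) := by
  have := tsum_eq_tripleProduct (norm_nome_lt_one hτ) (nome_ne_zero τ) (nome_ne_zero t)
    (a := (theta1Term · t τ)) (theta1Term_succ · t τ)
  rw [theta1Term_zero_mul, ← nome_neg, ← nomeProduct_zero, ← nomeProduct, ← nomeProduct] at this
  simp only [← theta1Deriv_zero, theta1Deriv, pow_zero, one_mul, this, ← mul_assoc, mul_neg,
    I_mul_I, neg_mul, neg_neg]

theorem theta1_ne_zero (hτ : 0 < τ.im) (ht : ¬ inLattice τ t) : theta1 t τ ≠ 0 := by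
  have sub_ne_zero : cexp (π * I * t) - cexp (-(π * I * t)) ≠ 0 := by
    refine sub_ne_zero.mpr fun h ↦ ht (inLattice_of_nome_pow_mul_nome_eq_one (n := 0) ?_)
    rw [pow_zero, one_mul, nome, show 2 * π * I * t = π * I * t + π * I * t by ring, exp_add]
    nth_rewrite 2 [h]
    rw [← exp_add, add_neg_cancel, exp_zero]
  refine right_ne_zero_of_mul (a := I) ?_
  rw [I_mul_theta1 t hτ]
  exact mul_ne_zero (mul_ne_zero (exp_ne_zero _) sub_ne_zero)
    (mul_ne_zero (mul_ne_zero (nomeProduct_zero_ne_zero hτ) (nomeProduct_ne_zero hτ ht))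
      (nomeProduct_ne_zero hτ (inLattice_neg_iff.not.mpr ht)))

lemma eta_eq_cexp_mul_nomeProduct (τ : ℂ) :
    η τ = cexp (2 * π * I * τ / 24) * nomeProduct 0 τ := by
  simp only [ModularForm.eta, Function.Periodic.qParam, ModularForm.eta_q_eq_pow, nomeProduct_zero,
    nome, ofReal_ofNat]

lemma hasDerivAt_mul_of_apply_eq_zero {𝕜 : Type*} [NontriviallyNormedField 𝕜] {f g : 𝕜 → 𝕜}
    {f' x : 𝕜} (hf : HasDerivAt f f' x) (hfx : f x = 0) (hg : ContinuousAt g x) :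
    HasDerivAt (fun z ↦ f z * g z) (f' * g x) x := by
  rw [hasDerivAt_iff_tendsto_slope] at hf ⊢
  refine (hf.mul (hg.tendsto.mono_left nhdsWithin_le_nhds)).congr fun z ↦ ?_
  simp only [slope, vsub_eq_sub, smul_eq_mul, hfx]
  ring

theorem theta1Deriv_one_zero (hτ : 0 < τ.im) : theta1Deriv 1 0 τ = 2 * π * η τ ^ 3 := by
  have linear : HasDerivAt (fun t : ℂ ↦ π * I * t) (π * I) 0 := by
    simpa using (hasDerivAt_id (0 : ℂ)).const_mul (π * I)
  have sine := (linear.cexp.sub linear.neg.cexp).const_mul (cexp (π * I * τ / 4))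
  have continuous_product := (continuous_const (y := nomeProduct 0 τ)).mul
    (continuous_nomeProduct hτ) |>.mul ((continuous_nomeProduct hτ).comp continuous_neg)
  have product := hasDerivAt_mul_of_apply_eq_zero sine (by simp) continuous_product.continuousAt
  have series := (hasDerivAt_theta1Deriv 0 0 hτ).const_mul I
  simp only [theta1Deriv_zero, I_mul_theta1 _ hτ] at series
  have eta_cube : η τ ^ 3 = cexp (π * I * τ / 4) * nomeProduct 0 τ ^ 3 := by
    rw [eta_eq_cexp_mul_nomeProduct, mul_pow, ← exp_nat_mul]
    congr 2
    push_cast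
    ring
  apply mul_left_cancel₀ I_ne_zero
  rw [series.unique product, eta_cube]
  simp only [Pi.neg_apply, Pi.mul_apply, mul_zero, neg_zero, exp_zero, Function.comp_apply]
  ring

lemma theta1Deriv_one_zero_ne_zero (hτ : 0 < τ.im) : theta1Deriv 1 0 τ ≠ 0 := by
  rw [theta1Deriv_one_zero hτ]
  exact mul_ne_zero (mod_cast Real.two_pi_pos.ne') (pow_ne_zero 3 (ModularForm.eta_ne_zero hτ))

lemma eventually_im_pos (hτ : 0 < τ.im) : ∀ᶠ w in 𝓝 τ, 0 < w.im :=
  continuous_im.continuousAt.eventually_const_lt hτ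

lemma hasDerivAt_eta (hτ : 0 < τ.im) :
    HasDerivAt η
      (η τ * (theta1Deriv 3 0 τ / theta1Deriv 1 0 τ / (12 * π * I))) τ := by
  have eta_deriv :=
    (ModularForm.differentiableAt_eta_of_mem_upperHalfPlaneSet (z := τ) hτ).hasDerivAt
  have cube := (eta_deriv.pow 3).const_mul (2 * π : ℂ)
  have heat := (hasDerivAt_theta1Deriv_tau 1 0 hτ).congr_of_eventuallyEq
    ((eventually_im_pos hτ).mono fun w hw ↦ (theta1Deriv_one_zero hw).symm)
  have cube_eq_heat := cube.unique heat
  have eta_ne := ModularForm.eta_ne_zero hτ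
  refine eta_deriv.congr_deriv ?_
  rw [theta1Deriv_one_zero hτ]
  simp only [Nat.cast_ofNat, Nat.reduceAdd, Nat.reduceSub] at cube_eq_heat
  field_simp at cube_eq_heat ⊢
  linear_combination cube_eq_heat

/-- The factor of automorphy of `ϑ₁` under `t ↦ t + τ`. -/
def theta1Automorphy (t τ : ℂ) : ℂ := -cexp (-(π * I * τ) - 2 * π * I * t)

lemma theta1Automorphy_ne_zero (t τ : ℂ) : theta1Automorphy t τ ≠ 0 :=
  neg_ne_zero.mpr (exp_ne_zero _)

lemma theta1Deriv_add_tau (k : ℕ) (t : ℂ) (hτ : 0 < τ.im) :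
    theta1Deriv k (t + τ) τ = theta1Automorphy t τ *
      ∑ m ∈ Finset.range (k + 1), theta1Deriv m t τ * (-(2 * π * I)) ^ (k - m) * k.choose m := by
  have freq (j : ℤ) : theta1Freq j = theta1Freq (j + 1) + -(2 * π * I) := by
    rw [theta1Freq, theta1Freq]; push_cast; ring
  have term (j : ℤ) : theta1Freq j ^ k * theta1Term j (t + τ) τ =
      theta1Automorphy t τ * ∑ m ∈ Finset.range (k + 1),
        theta1Freq (j + 1) ^ m * theta1Term (j + 1) t τ *
          ((-(2 * π * I)) ^ (k - m) * k.choose m) := by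
    rw [theta1Term_add_tau, freq j, add_pow, ← theta1Automorphy, mul_left_comm, Finset.sum_mul]
    congr 1
    exact Finset.sum_congr rfl fun m _ ↦ by ring
  have shift := (Equiv.addRight (1 : ℤ)).tsum_eq fun j ↦ ∑ m ∈ Finset.range (k + 1),
    theta1Freq j ^ m * theta1Term j t τ * ((-(2 * π * I)) ^ (k - m) * k.choose m)
  simp only [Equiv.coe_addRight] at shift
  simp only [theta1Deriv, term, tsum_mul_left, shift]
  rw [Summable.tsum_finsetSum fun m _ ↦ (summable_theta1Deriv m t hτ).mul_right _, ← mul_neg,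
    ← Finset.sum_neg_distrib]
  congr 1
  refine Finset.sum_congr rfl fun m _ ↦ ?_
  rw [tsum_mul_right]
  ring

end ThetaProduct

section EllipticFunctions

variable {τ : ℂ} {f g h : ℂ → ℂ}

lemma apply_add_of_inLattice {α : Type*} {f : ℂ → α} (h_one : Function.Periodic f 1)
    (h_tau : Function.Periodic f τ) {w : ℂ} (hw : inLattice τ w) (z : ℂ) : f (z + w) = f z := by
  obtain ⟨m, n, rfl⟩ := hw
  rw [← add_assoc, h_tau.int_mul n, ← mul_one (m : ℂ), h_one.int_mul m]

lemma exists_mem_unitSquare_add_inLattice (hτ : 0 < τ.im) (z : ℂ) :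
    ∃ p ∈ Set.Icc (0 : ℝ) 1 ×ˢ Set.Icc (0 : ℝ) 1, ∃ w, inLattice τ w ∧
      z = p.1 + p.2 * τ + w := by
  set v := z.im / τ.im with hv
  set u := z.re - v * τ.re with hu
  have z_eq : z = u + v * τ := by
    apply Complex.ext
    · simp [hu]
    · simp [hv, hτ.ne']
  refine ⟨(Int.fract u, Int.fract v), ⟨⟨Int.fract_nonneg u, (Int.fract_lt_one u).le⟩,
    Int.fract_nonneg v, (Int.fract_lt_one v).le⟩, ⌊u⌋ + ⌊v⌋ * τ, ⟨_, _, rfl⟩, ?_⟩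
  simp only [Int.fract]
  push_cast
  linear_combination z_eq

theorem apply_eq_apply_of_doubly_periodic (hτ : 0 < τ.im) (hf : Differentiable ℂ f)
    (h_one : Function.Periodic f 1) (h_tau : Function.Periodic f τ) (z w : ℂ) : f z = f w := by
  have compact : IsCompact ((fun p : ℝ × ℝ ↦ f (p.1 + p.2 * τ)) ''
      (Set.Icc 0 1 ×ˢ Set.Icc 0 1)) := by
    have := hf.continuous
    exact (isCompact_Icc.prod isCompact_Icc).image (by fun_prop)
  refine hf.apply_eq_apply_of_bounded (compact.isBounded.subset ?_) z w
  rintro _ ⟨z, rfl⟩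
  obtain ⟨p, hp, w, hw, rfl⟩ := exists_mem_unitSquare_add_inLattice hτ z
  exact ⟨p, hp, (apply_add_of_inLattice h_one h_tau hw _).symm⟩

lemma differentiableAt_dslope_self (hf : Differentiable ℂ f) (z : ℂ) :
    DifferentiableAt ℂ (dslope f z) z :=
  ((differentiableOn_dslope univ_mem).mpr hf.differentiableOn).differentiableAt univ_mem

lemma exists_differentiable_eq_mul (hf : Differentiable ℂ f) (hg : Differentiable ℂ g)
    (hfg : ∀ z, g z = 0 → f z = 0 ∧ deriv g z ≠ 0) :
    ∃ h : ℂ → ℂ, Differentiable ℂ h ∧ ∀ z, f z = g z * h z := by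
  classical
  refine ⟨fun z ↦ if g z = 0 then deriv f z / deriv g z else f z / g z, fun z ↦ ?_, fun z ↦ ?_⟩
  · by_cases hgz : g z = 0
    · obtain ⟨hfz, hg'z⟩ := hfg z hgz
      have hne : dslope g z z ≠ 0 := by rwa [dslope_same]
      have hgs := differentiableAt_dslope_self hg z
      refine ((differentiableAt_dslope_self hf z).div hgs hne).congr_of_eventuallyEq ?_
      filter_upwards [hgs.continuousAt.eventually_ne hne] with w hw
      rcases eq_or_ne w z with rfl | hwz
      · simp only [hgz, if_true, Pi.div_apply, dslope_same]
      · simp only [dslope_of_ne _ hwz, slope, vsub_eq_sub, smul_eq_mul, hgz, hfz, sub_zero,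
          Pi.div_apply] at hw ⊢
        rw [if_neg (right_ne_zero_of_mul hw),
          mul_div_mul_left _ _ (inv_ne_zero (sub_ne_zero.mpr hwz))]
    · refine ((hf z).div (hg z) hgz).congr_of_eventuallyEq ?_
      filter_upwards [(hg z).continuousAt.eventually_ne hgz] with w hw
      rw [if_neg hw, Pi.div_apply]
  · by_cases hgz : g z = 0
    · rw [hgz, zero_mul, (hfg z hgz).1]
    · simp only [if_neg hgz, mul_div_cancel₀ _ hgz]

lemma periodic_of_eq_mul (hg : Differentiable ℂ g) (hh : Differentiable ℂ h) (hg_ne : g ≠ 0)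
    (hfgh : ∀ z, f z = g z * h z) {c : ℂ} {e : ℂ → ℂ} (he : ∀ z, e z ≠ 0)
    (hfc : ∀ z, f (z + c) = e z * f z) (hgc : ∀ z, g (z + c) = e z * g z) :
    Function.Periodic h c := by
  have mul_sub_eq_zero (z : ℂ) : g z * (h (z + c) - h z) = 0 := by
    apply mul_left_cancel₀ (he z)
    linear_combination hfc z - hfgh (z + c) + e z * hfgh z - h (z + c) * hgc z
  have sub_differentiable : Differentiable ℂ fun z ↦ h (z + c) - h z := by fun_prop
  rcases (analyticOnNhd_univ_iff_differentiable.mpr hg).eq_zero_or_eq_zero_of_mul_eq_zero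
    (analyticOnNhd_univ_iff_differentiable.mpr sub_differentiable)
    (fun z _ ↦ mul_sub_eq_zero z) isPreconnected_univ with hg_zero | hh_zero
  · exact absurd (funext fun z ↦ hg_zero z trivial) hg_ne
  · exact fun z ↦ sub_eq_zero.mp (hh_zero z trivial)

theorem exists_eq_const_mul_of_automorphy (hτ : 0 < τ.im) (hf : Differentiable ℂ f)
    (hg : Differentiable ℂ g) (hfg : ∀ z, g z = 0 → f z = 0 ∧ deriv g z ≠ 0)
    {e₁ eτ : ℂ → ℂ} (he₁ : ∀ z, e₁ z ≠ 0) (heτ : ∀ z, eτ z ≠ 0)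
    (hf₁ : ∀ z, f (z + 1) = e₁ z * f z) (hg₁ : ∀ z, g (z + 1) = e₁ z * g z)
    (hfτ : ∀ z, f (z + τ) = eτ z * f z) (hgτ : ∀ z, g (z + τ) = eτ z * g z) :
    ∃ C, ∀ z, f z = C * g z := by
  obtain ⟨h, hh, hmul⟩ := exists_differentiable_eq_mul hf hg hfg
  have hg_ne : g ≠ 0 := by
    rintro rfl
    exact (hfg 0 rfl).2 (deriv_const 0 (0 : ℂ))
  have h_const := apply_eq_apply_of_doubly_periodic hτ hh
    (periodic_of_eq_mul hg hh hg_ne hmul he₁ hf₁ hg₁)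
    (periodic_of_eq_mul hg hh hg_ne hmul heτ hfτ hgτ)
  exact ⟨h 0, fun z ↦ by rw [hmul z, h_const z 0, mul_comm]⟩

end EllipticFunctions

section RhoIdentity

open scoped Real

variable {τ : ℂ}

lemma theta1Deriv_zero_add_tau (t : ℂ) (hτ : 0 < τ.im) :
    theta1Deriv 0 (t + τ) τ = theta1Automorphy t τ * theta1Deriv 0 t τ := by
  simp [theta1Deriv_add_tau 0 t hτ]

lemma theta1Deriv_one_add_tau (t : ℂ) (hτ : 0 < τ.im) :
    theta1Deriv 1 (t + τ) τ =
      theta1Automorphy t τ * (theta1Deriv 1 t τ - 2 * π * I * theta1Deriv 0 t τ) := by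
  simp only [theta1Deriv_add_tau 1 t hτ, Finset.sum_range_succ, Finset.sum_range_zero,
    Nat.choose_self, Nat.choose_zero_right]
  push_cast
  ring

lemma theta1Deriv_two_add_tau (t : ℂ) (hτ : 0 < τ.im) :
    theta1Deriv 2 (t + τ) τ = theta1Automorphy t τ * (theta1Deriv 2 t τ -
      4 * π * I * theta1Deriv 1 t τ + (2 * π * I) ^ 2 * theta1Deriv 0 t τ) := by
  simp only [theta1Deriv_add_tau 2 t hτ, Finset.sum_range_succ, Finset.sum_range_zero,
    Nat.choose_self, Nat.choose_zero_right, Nat.choose_one_right]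
  push_cast
  ring

lemma theta1Deriv_of_inLattice (hτ : 0 < τ.im) {t : ℂ} (ht : inLattice τ t) :
    theta1Deriv 0 t τ = 0 ∧ theta1Deriv 1 t τ ≠ 0 := by
  have invariant := apply_add_of_inLattice (f := fun z ↦ theta1Deriv 0 z τ = 0 ∧
    theta1Deriv 1 z τ ≠ 0) (fun z ↦ ?_) (fun z ↦ ?_) ht 0
  · rw [zero_add] at invariant
    exact invariant.mpr
      ⟨theta1Deriv_apply_zero_of_even Even.zero τ, theta1Deriv_one_zero_ne_zero hτ⟩
  · simp only [theta1Deriv_add_one, neg_eq_zero, ne_eq]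
  · have aut_ne := theta1Automorphy_ne_zero z τ
    simp only [theta1Deriv_zero_add_tau z hτ, theta1Deriv_one_add_tau z hτ, mul_eq_zero, aut_ne,
      false_or, eq_iff_iff, ne_eq]
    exact and_congr_right fun h ↦ by rw [h, mul_zero, sub_zero]

lemma theta1Deriv_zero_eq_zero_iff (hτ : 0 < τ.im) (t : ℂ) :
    theta1Deriv 0 t τ = 0 ↔ inLattice τ t := by
  refine ⟨fun h ↦ ?_, fun h ↦ (theta1Deriv_of_inLattice hτ h).1⟩
  by_contra ht
  exact theta1_ne_zero hτ ht (by rwa [← theta1Deriv_zero])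

/-- Up to sign, the second derivative at `x = 0` of `ϑ₁(x + a) ϑ₁(x + b) ϑ₁(x - a - b)`; it is the
numerator of `(ρ(a) + ρ(b) - ρ(a + b))² + ρ'(a) + ρ'(b) + ρ'(a + b)`. -/
def rhoTripleNumerator (a b τ : ℂ) : ℂ :=
  theta1Deriv 2 a τ * theta1Deriv 0 b τ * theta1Deriv 0 (a + b) τ +
    theta1Deriv 0 a τ * theta1Deriv 2 b τ * theta1Deriv 0 (a + b) τ +
    theta1Deriv 0 a τ * theta1Deriv 0 b τ * theta1Deriv 2 (a + b) τ +
    2 * (theta1Deriv 1 a τ * theta1Deriv 1 b τ * theta1Deriv 0 (a + b) τ -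
      theta1Deriv 1 a τ * theta1Deriv 0 b τ * theta1Deriv 1 (a + b) τ -
      theta1Deriv 0 a τ * theta1Deriv 1 b τ * theta1Deriv 1 (a + b) τ)

lemma rhoTripleNumerator_add_one (a b τ : ℂ) :
    rhoTripleNumerator (a + 1) b τ = rhoTripleNumerator a b τ := by
  simp only [rhoTripleNumerator, add_right_comm a 1 b, theta1Deriv_add_one]
  ring

lemma rhoTripleNumerator_add_tau (a b : ℂ) (hτ : 0 < τ.im) :
    rhoTripleNumerator (a + τ) b τ =
      theta1Automorphy a τ * theta1Automorphy (a + b) τ * rhoTripleNumerator a b τ := by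
  simp only [rhoTripleNumerator, add_right_comm a τ b, theta1Deriv_zero_add_tau _ hτ,
    theta1Deriv_one_add_tau _ hτ, theta1Deriv_two_add_tau _ hτ]
  ring

lemma rhoTripleNumerator_zero (b τ : ℂ) : rhoTripleNumerator 0 b τ = 0 := by
  simp only [rhoTripleNumerator, zero_add, theta1Deriv_apply_zero_of_even Even.zero,
    theta1Deriv_apply_zero_of_even even_two]
  ring

lemma rhoTripleNumerator_neg_self (b τ : ℂ) : rhoTripleNumerator (-b) b τ = 0 := by
  simp only [rhoTripleNumerator, neg_add_cancel, theta1Deriv_apply_zero_of_even Even.zero,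
    theta1Deriv_apply_zero_of_even even_two, theta1Deriv_neg]
  ring

lemma rhoTripleNumerator_add_eq_zero_iff (a b : ℂ) (hτ : 0 < τ.im) {w : ℂ} (hw : inLattice τ w) :
    rhoTripleNumerator (a + w) b τ = 0 ↔ rhoTripleNumerator a b τ = 0 := by
  refine iff_of_eq (apply_add_of_inLattice (f := fun a ↦ rhoTripleNumerator a b τ = 0)
    (fun z ↦ ?_) (fun z ↦ ?_) hw a)
  · simp only [rhoTripleNumerator_add_one]
  · simp only [rhoTripleNumerator_add_tau _ _ hτ, mul_eq_zero, theta1Automorphy_ne_zero, false_or]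

lemma hasDerivAt_rhoTripleNumerator (a b : ℂ) (hτ : 0 < τ.im) :
    HasDerivAt (rhoTripleNumerator · b τ)
      (theta1Deriv 3 a τ * theta1Deriv 0 b τ * theta1Deriv 0 (a + b) τ -
        theta1Deriv 2 a τ * theta1Deriv 0 b τ * theta1Deriv 1 (a + b) τ -
        theta1Deriv 1 a τ * theta1Deriv 0 b τ * theta1Deriv 2 (a + b) τ +
        theta1Deriv 0 a τ * theta1Deriv 0 b τ * theta1Deriv 3 (a + b) τ +
        theta1Deriv 1 a τ * theta1Deriv 2 b τ * theta1Deriv 0 (a + b) τ +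
        theta1Deriv 0 a τ * theta1Deriv 2 b τ * theta1Deriv 1 (a + b) τ +
        2 * (theta1Deriv 2 a τ * theta1Deriv 1 b τ * theta1Deriv 0 (a + b) τ -
          theta1Deriv 0 a τ * theta1Deriv 1 b τ * theta1Deriv 2 (a + b) τ)) a := by
  have term (k l m : ℕ) :
      HasDerivAt (fun a ↦ theta1Deriv k a τ * theta1Deriv l b τ * theta1Deriv m (a + b) τ)
        (theta1Deriv (k + 1) a τ * theta1Deriv l b τ * theta1Deriv m (a + b) τ +
          theta1Deriv k a τ * theta1Deriv l b τ * theta1Deriv (m + 1) (a + b) τ) a :=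
    ((hasDerivAt_theta1Deriv k a hτ).mul_const _).fun_mul
      ((hasDerivAt_theta1Deriv m (a + b) hτ).comp_add_const a b)
  refine ((((term 2 0 0).fun_add (term 0 2 0)).fun_add (term 0 0 2)).fun_add
    ((((term 1 1 0).fun_sub (term 1 0 1)).fun_sub (term 0 1 1)).const_mul 2)).congr_deriv ?_
  ring

lemma inLattice_sub {z w : ℂ} (hz : inLattice τ z) (hw : inLattice τ w) : inLattice τ (z - w) := by
  obtain ⟨m, n, rfl⟩ := hz
  obtain ⟨m', n', rfl⟩ := hw
  exact ⟨m - m', n - n', by push_cast; ring⟩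

lemma hasDerivAt_theta1Deriv_mul_add (a b : ℂ) (hτ : 0 < τ.im) :
    HasDerivAt (fun a ↦ theta1Deriv 0 a τ * theta1Deriv 0 (a + b) τ)
      (theta1Deriv 1 a τ * theta1Deriv 0 (a + b) τ +
        theta1Deriv 0 a τ * theta1Deriv 1 (a + b) τ) a :=
  (hasDerivAt_theta1Deriv 0 a hτ).fun_mul ((hasDerivAt_theta1Deriv 0 (a + b) hτ).comp_add_const a b)

lemma rhoTripleNumerator_eq_zero_and_deriv_ne_zero (hτ : 0 < τ.im) {a b : ℂ}
    (hb : ¬ inLattice τ b) (hab : theta1Deriv 0 a τ * theta1Deriv 0 (a + b) τ = 0) :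
    rhoTripleNumerator a b τ = 0 ∧
      deriv (fun a ↦ theta1Deriv 0 a τ * theta1Deriv 0 (a + b) τ) a ≠ 0 := by
  rw [(hasDerivAt_theta1Deriv_mul_add a b hτ).deriv]
  rcases mul_eq_zero.mp hab with ha_eq | hab_eq
  · have ha := (theta1Deriv_zero_eq_zero_iff hτ a).mp ha_eq
    have hab_ne : theta1Deriv 0 (a + b) τ ≠ 0 := (theta1Deriv_zero_eq_zero_iff hτ _).not.mpr
      fun h ↦ hb (by simpa using inLattice_sub h ha)
    refine ⟨?_, ?_⟩
    · rw [← zero_add a, rhoTripleNumerator_add_eq_zero_iff 0 b hτ ha, rhoTripleNumerator_zero]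
    · rw [ha_eq, zero_mul, add_zero]
      exact mul_ne_zero (theta1Deriv_of_inLattice hτ ha).2 hab_ne
  · have hab_mem := (theta1Deriv_zero_eq_zero_iff hτ _).mp hab_eq
    have ha_ne : theta1Deriv 0 a τ ≠ 0 := (theta1Deriv_zero_eq_zero_iff hτ _).not.mpr
      fun h ↦ hb (by simpa using inLattice_sub hab_mem h)
    refine ⟨?_, ?_⟩
    · rw [show a = -b + (a + b) by ring, rhoTripleNumerator_add_eq_zero_iff _ b hτ hab_mem,
        rhoTripleNumerator_neg_self]
    · rw [hab_eq, mul_zero, zero_add]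
      exact mul_ne_zero ha_ne (theta1Deriv_of_inLattice hτ hab_mem).2

theorem rhoTripleNumerator_eq (hτ : 0 < τ.im) (a : ℂ) {b : ℂ} (hb : ¬ inLattice τ b) :
    rhoTripleNumerator a b τ = theta1Deriv 3 0 τ / theta1Deriv 1 0 τ *
      (theta1Deriv 0 a τ * theta1Deriv 0 b τ * theta1Deriv 0 (a + b) τ) := by
  obtain ⟨C, hC⟩ := exists_eq_const_mul_of_automorphy hτ
    (f := (rhoTripleNumerator · b τ)) (g := fun a ↦ theta1Deriv 0 a τ * theta1Deriv 0 (a + b) τ)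
    (e₁ := 1) (eτ := fun a ↦ theta1Automorphy a τ * theta1Automorphy (a + b) τ)
    (fun a ↦ (hasDerivAt_rhoTripleNumerator a b hτ).differentiableAt)
    (fun a ↦ (hasDerivAt_theta1Deriv_mul_add a b hτ).differentiableAt)
    (fun _ ↦ rhoTripleNumerator_eq_zero_and_deriv_ne_zero hτ hb)
    (fun _ ↦ one_ne_zero)
    (fun a ↦ mul_ne_zero (theta1Automorphy_ne_zero a τ) (theta1Automorphy_ne_zero (a + b) τ))
    (fun a ↦ by simp only [rhoTripleNumerator_add_one, Pi.one_apply, one_mul])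
    (fun a ↦ by simp only [add_right_comm a 1 b, theta1Deriv_add_one, Pi.one_apply]; ring)
    (fun a ↦ rhoTripleNumerator_add_tau a b hτ)
    (fun a ↦ by simp only [add_right_comm a τ b, theta1Deriv_zero_add_tau _ hτ]; ring)
  have deriv_at_zero := (hasDerivAt_rhoTripleNumerator 0 b hτ).unique
    (((hasDerivAt_theta1Deriv_mul_add 0 b hτ).const_mul C).congr_of_eventuallyEq (.of_forall hC))
  simp only [zero_add, theta1Deriv_apply_zero_of_even Even.zero,
    theta1Deriv_apply_zero_of_even even_two] at deriv_at_zero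
  have theta_b_ne := (theta1Deriv_zero_eq_zero_iff hτ b).not.mpr hb
  have theta_deriv_ne := theta1Deriv_one_zero_ne_zero hτ
  have C_eq : C = theta1Deriv 3 0 τ / theta1Deriv 1 0 τ * theta1Deriv 0 b τ := by
    field_simp
    apply mul_left_cancel₀ theta_b_ne
    linear_combination -deriv_at_zero
  rw [hC a, C_eq]
  ring

/-- The derivative `ϑ₁''/ϑ₁ - ρ²` of `ρ` away from the lattice. At lattice points the convention
`x / 0 = 0` makes both this and `rhoF` vanish. -/
def rhoDeriv (t τ : ℂ) : ℂ := theta1Deriv 2 t τ / theta1 t τ - rhoF t τ ^ 2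

lemma rhoF_neg (t : ℂ) (hτ : 0 < τ.im) : rhoF (-t) τ = -rhoF t τ := by
  simp [rhoF, ← theta1Deriv_zero, theta1'_eq_theta1Deriv _ hτ, theta1Deriv_neg, div_neg]

lemma rhoDeriv_neg (t : ℂ) (hτ : 0 < τ.im) : rhoDeriv (-t) τ = rhoDeriv t τ := by
  rw [rhoDeriv, rhoDeriv, rhoF_neg t hτ, neg_sq, ← theta1Deriv_zero, theta1Deriv_neg,
    theta1Deriv_neg, theta1Deriv_zero]
  norm_num

lemma rhoF_zero (τ : ℂ) : rhoF 0 τ = 0 := by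
  rw [rhoF, ← theta1Deriv_zero, theta1Deriv_apply_zero_of_even Even.zero, div_zero]

lemma rhoDeriv_zero (τ : ℂ) : rhoDeriv 0 τ = 0 := by
  rw [rhoDeriv, rhoF_zero, ← theta1Deriv_zero, theta1Deriv_apply_zero_of_even Even.zero, div_zero,
    zero_pow two_ne_zero, sub_zero]

lemma hasDerivAt_rhoF (hτ : 0 < τ.im) {t : ℂ} (ht : theta1 t τ ≠ 0) :
    HasDerivAt (rhoF · τ) (rhoDeriv t τ) t := by
  simp only [rhoDeriv, rhoF, theta1'_eq_theta1Deriv _ hτ, ← theta1Deriv_zero] at ht ⊢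
  refine ((hasDerivAt_theta1Deriv 1 t hτ).fun_div (hasDerivAt_theta1Deriv 0 t hτ) ht).congr_deriv ?_
  field_simp

theorem sq_rhoF_add_rhoF_add_rhoF (hτ : 0 < τ.im) {u v w : ℂ} (huvw : u + v + w = 0)
    (hu : ¬ inLattice τ u) (hv : ¬ inLattice τ v) (hw : ¬ inLattice τ w) :
    (rhoF u τ + rhoF v τ + rhoF w τ) ^ 2 + rhoDeriv u τ + rhoDeriv v τ + rhoDeriv w τ =
      theta1Deriv 3 0 τ / theta1Deriv 1 0 τ := by
  obtain rfl : w = -(u + v) := by linear_combination huvw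
  have hu_ne := theta1_ne_zero hτ hu
  have hv_ne := theta1_ne_zero hτ hv
  have huv_ne := theta1_ne_zero hτ (inLattice_neg_iff.not.mp hw)
  have numerator_eq := rhoTripleNumerator_eq hτ u hv
  rw [rhoF_neg _ hτ, rhoDeriv_neg _ hτ]
  simp only [rhoTripleNumerator, theta1Deriv_zero] at numerator_eq
  simp only [rhoDeriv, rhoF, theta1'_eq_theta1Deriv _ hτ]
  generalize theta1Deriv 3 0 τ / theta1Deriv 1 0 τ = C at numerator_eq ⊢
  field_simp
  linear_combination (theta1 u τ * theta1 v τ * theta1 (u + v) τ) * numerator_eq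

end RhoIdentity

section TripleSums

variable {ι R : Type*} [Fintype ι] [CommRing R] {r s : ι → ι → R} {C : R}

lemma sum_rotate (f : ι → ι → ι → R) : ∑ i, ∑ j, ∑ k, f j k i = ∑ i, ∑ j, ∑ k, f i j k := by
  rw [Finset.sum_comm]
  exact Finset.sum_congr rfl fun _ _ ↦ Finset.sum_comm

lemma sum_mul_of_antisymm (hr : ∀ i j, r j i = -r i j) :
    ∑ i, ∑ j, r i j * ∑ k, r j k = -∑ i, (∑ l, r i l) ^ 2 := by
  rw [Finset.sum_comm, ← Finset.sum_neg_distrib]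
  refine Finset.sum_congr rfl fun j _ ↦ ?_
  simp only [← Finset.sum_mul, hr j, Finset.sum_neg_distrib]
  ring

lemma sum_ite_distinct [DecidableEq ι] (C : R) :
    ∑ i : ι, ∑ j, ∑ k, (if i ≠ j ∧ j ≠ k ∧ k ≠ i then C else 0) =
      Fintype.card ι * (Fintype.card ι - 1) * (Fintype.card ι - 2) * C := by
  have inclusion_exclusion (i j k : ι) : (if i ≠ j ∧ j ≠ k ∧ k ≠ i then C else 0) =
      C - (if i = j then C else 0) - (if j = k then C else 0) - (if k = i then C else 0) +
        (if i = j then if j = k then 2 * C else 0 else 0) := by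
    grind
  simp only [inclusion_exclusion, Finset.sum_add_distrib, Finset.sum_sub_distrib, Finset.sum_const,
    Finset.card_univ, nsmul_eq_mul, Finset.sum_ite_irrel, mul_ite, mul_zero,
    Finset.sum_ite_eq, Finset.sum_ite_eq', Finset.mem_univ, if_true]
  ring

theorem sum_sq_sum_of_triple_identity (hr : ∀ i j, r j i = -r i j) (hr₀ : ∀ i, r i i = 0)
    (hs : ∀ i j, s j i = s i j) (hs₀ : ∀ i, s i i = 0)
    (h : ∀ i j k, i ≠ j → j ≠ k → k ≠ i →
      (r i j + r j k + r k i) ^ 2 + s i j + s j k + s k i = C) :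
    3 * (Fintype.card ι * (∑ i, ∑ j, (r i j ^ 2 + s i j)) - 2 * ∑ i, (∑ l, r i l) ^ 2) =
      Fintype.card ι * (Fintype.card ι - 1) * (Fintype.card ι - 2) * C + 6 * ∑ i, ∑ j, s i j := by
  classical
  let e (i j k : ι) : R := r i j ^ 2 + s i j + 2 * (r i j * r j k)
  let d (i j k : ι) : R := if i = j then 2 * s i k else 0
  have pointwise (i j k : ι) : e i j k + e j k i + e k i j =
      (if i ≠ j ∧ j ≠ k ∧ k ≠ i then C else 0) + (d i j k + d j k i + d k i j) := by
    have := h i j k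
    grind
  have sum_e : ∑ i, ∑ j, ∑ k, e i j k =
      Fintype.card ι * (∑ i, ∑ j, (r i j ^ 2 + s i j)) - 2 * ∑ i, (∑ l, r i l) ^ 2 := by
    simp only [e, Finset.sum_add_distrib, ← Finset.mul_sum, sum_mul_of_antisymm hr,
      Finset.sum_const, Finset.card_univ, nsmul_eq_mul]
    ring
  have sum_d : ∑ i, ∑ j, ∑ k, d i j k = 2 * ∑ i, ∑ j, s i j := by
    rw [Fintype.sum_congr _ _ fun i ↦ Finset.sum_comm]
    simp only [d, Finset.sum_ite_eq, Finset.mem_univ, if_true, Finset.mul_sum]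
  have sum_pointwise := Fintype.sum_congr _ _ fun i ↦ Fintype.sum_congr _ _ fun j ↦
    Fintype.sum_congr _ _ fun k ↦ pointwise i j k
  simp only [Finset.sum_add_distrib (s := (Finset.univ : Finset ι)), sum_ite_distinct,
    sum_rotate fun i j k ↦ e j k i, sum_rotate e, sum_rotate fun i j k ↦ d j k i, sum_rotate d]
    at sum_pointwise
  linear_combination sum_pointwise - 3 * sum_e + 3 * sum_d

end TripleSums

section LogarithmicDerivative

variable {𝕜 : Type*} [NontriviallyNormedField 𝕜] {F L : 𝕜 → 𝕜} {L₀ x : 𝕜}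

lemma hasDerivAt_finsetProd_of_logDeriv {ι : Type*} {u : Finset ι} {f : ι → 𝕜 → 𝕜} {L : ι → 𝕜}
    (hf : ∀ i ∈ u, HasDerivAt (f i) (f i x * L i) x) :
    HasDerivAt (fun z ↦ ∏ i ∈ u, f i z) ((∏ i ∈ u, f i x) * ∑ i ∈ u, L i) x := by
  classical
  refine (HasDerivAt.fun_finsetProd hf).congr_deriv ?_
  rw [Finset.mul_sum]
  refine Finset.sum_congr rfl fun i hi ↦ ?_
  rw [smul_eq_mul, ← mul_assoc, Finset.prod_erase_mul u _ hi]

lemma hasDerivAt_pow_of_logDeriv (n : ℕ) (hF : HasDerivAt F (F x * L₀) x) :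
    HasDerivAt (fun z ↦ F z ^ n) (F x ^ n * (n * L₀)) x := by
  simpa using hasDerivAt_finsetProd_of_logDeriv (u := Finset.range n) fun _ _ ↦ hF

lemma deriv_deriv_pow_of_logDeriv (n : ℕ) (hF : ∀ᶠ z in 𝓝 x, HasDerivAt F (F z * L z) z)
    (hL : HasDerivAt L L₀ x) :
    deriv (deriv fun z ↦ F z ^ n) x = F x ^ n * (n ^ 2 * L x ^ 2 + n * L₀) := by
  have deriv_eq : deriv (fun z ↦ F z ^ n) =ᶠ[𝓝 x] fun z ↦ F z ^ n * (n * L z) :=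
    hF.mono fun z hz ↦ (hasDerivAt_pow_of_logDeriv n hz).deriv
  have hasDerivAt_deriv :=
    (hasDerivAt_pow_of_logDeriv n hF.self_of_nhds).fun_mul (hL.const_mul (n : 𝕜))
  rw [deriv_eq.deriv_eq, hasDerivAt_deriv.deriv]
  ring

end LogarithmicDerivative

section PairSums

variable {ι R : Type*} [Fintype ι] [LinearOrder ι] [LocallyFiniteOrderTop ι]
  [LocallyFiniteOrderBot ι] [CommRing R]

lemma two_mul_sum_sum_Ioi_add_sum_diag {f : ι → ι → R} (hf : ∀ i j, f j i = f i j) :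
    2 * ∑ i, ∑ j ∈ Finset.Ioi i, f i j + ∑ i, f i i = ∑ i, ∑ j, f i j := by
  have off_diag : 2 * ∑ i, ∑ j ∈ Finset.Ioi i, f i j = ∑ i, ∑ j ∈ {i}ᶜ, f i j := by
    simpa only [hf _, ← two_mul, ← Finset.mul_sum]
      using Finset.sum_sum_Ioi_add_eq_sum_sum_off_diag f
  rw [off_diag, add_comm, ← Finset.sum_add_distrib]
  exact Fintype.sum_congr _ _ fun i ↦ (Fintype.sum_eq_add_sum_compl i (f i)).symm

lemma sum_sum_Ioi_single_sub_single_mul {r : ι → ι → R} (hr : ∀ i j, r j i = -r i j)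
    (hr₀ : ∀ i, r i i = 0) (i₀ : ι) :
    ∑ i, ∑ j ∈ Finset.Ioi i, ((Pi.single i₀ 1 : ι → R) i - (Pi.single i₀ 1 : ι → R) j) * r i j =
      ∑ j, r i₀ j := by
  calc _
    _ = ∑ i, ∑ j ∈ Finset.Ioi i,
          ((Pi.single i₀ 1 : ι → R) i * r i j + (Pi.single i₀ 1 : ι → R) j * r j i) := by
      refine Fintype.sum_congr _ _ fun i ↦ Finset.sum_congr rfl fun j _ ↦ ?_
      rw [hr i j]
      ring
    _ = ∑ i, ∑ j ∈ {i}ᶜ, (Pi.single i₀ 1 : ι → R) i * r i j :=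
      Finset.sum_sum_Ioi_add_eq_sum_sum_off_diag fun j i ↦ (Pi.single i₀ 1 : ι → R) i * r i j
    _ = ∑ j ∈ {i₀}ᶜ, r i₀ j := by
      simp only [← Finset.mul_sum]
      simp [Pi.single_apply]
    _ = ∑ j, r i₀ j := by rw [Fintype.sum_eq_add_sum_compl i₀, hr₀, zero_add]

end PairSums

section WeylKac

open scoped Real ModularForm

variable {N : ℕ} {lam : Fin N → ℂ} {τ : ℂ}

lemma tprod_weylKac_factors (lam : Fin N → ℂ) (hτ : 0 < τ.im) :
    ∏' k : ℕ, ((1 - nome τ ^ (k + 1)) ^ (N - 1) *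
        ∏ j : Fin N, ∏ l ∈ {j}ᶜ, (1 - nome τ ^ (k + 1) * nome (lam j - lam l))) =
      nomeProduct 0 τ ^ (N - 1) * ∏ j : Fin N, ∏ l ∈ {j}ᶜ, nomeProduct (lam j - lam l) τ := by
  have hasProd (t : ℂ) :
      HasProd (fun k : ℕ ↦ 1 - nome τ ^ (k + 1) * nome t) (nomeProduct t τ) :=
    (multipliable_one_sub_pow_mul (norm_nome_lt_one hτ) _).hasProd
  have hasProd_zero := hasProd 0
  simp only [nome_zero, mul_one] at hasProd_zero
  exact ((hasProd_zero.pow (N - 1)).mul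
    (hasProd_prod fun j _ ↦ hasProd_prod fun l _ ↦ hasProd (lam j - lam l))).tprod_eq

lemma I_mul_theta1_div_eta (t : ℂ) (hτ : 0 < τ.im) :
    I * theta1 t τ / η τ = (cexp (π * I * t) - cexp (-(π * I * t))) *
      ((cexp (2 * π * I * τ / 24) * nomeProduct t τ) *
        (cexp (2 * π * I * τ / 24) * nomeProduct (-t) τ)) := by
  have eta_ne := ModularForm.eta_ne_zero hτ
  rw [div_eq_iff eta_ne, I_mul_theta1 t hτ, eta_eq_cexp_mul_nomeProduct]
  have : cexp (π * I * τ / 4) = cexp (2 * π * I * τ / 24) ^ 3 := by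
    rw [← exp_nat_mul]
    congr 1
    push_cast
    ring
  rw [this]
  ring

lemma cexp_mul_sq_sub_one_eq_prod (N : ℕ) (τ : ℂ) :
    cexp (2 * π * I * τ * ((N ^ 2 - 1 : ℕ) : ℂ) / 24) =
      cexp (2 * π * I * τ / 24) ^ (N - 1) *
        ∏ j : Fin N, ∏ _l ∈ {j}ᶜ, cexp (2 * π * I * τ / 24) := by
  have exponent_eq : N ^ 2 - 1 = N - 1 + (N - 1) * N := by
    cases N with
    | zero => rfl
    | succ n => rw [Nat.add_sub_cancel, show (n + 1) ^ 2 = n + n * (n + 1) + 1 by ring,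
        Nat.add_sub_cancel]
  rw [mul_div_right_comm, mul_comm, exp_nat_mul, exponent_eq]
  simp only [Finset.prod_const, Finset.card_compl, Finset.card_singleton, Finset.card_univ,
    Fintype.card_fin, pow_mul, pow_add]

theorem weylKac_eq_eta_pow_mul_prod (lam : Fin N → ℂ) (hτ : 0 < τ.im) :
    WeylKac N lam τ = η τ ^ (N - 1) *
      ∏ j : Fin N, ∏ l ∈ Finset.Ioi j, (I * theta1 (lam j - lam l) τ / η τ) := by
  have pair_prod := Finset.prod_prod_Ioi_mul_eq_prod_prod_off_diag fun l j : Fin N ↦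
    cexp (2 * π * I * τ / 24) * nomeProduct (lam j - lam l) τ
  have exp_eq := cexp_mul_sq_sub_one_eq_prod N τ
  have factors_eq := tprod_weylKac_factors lam hτ
  simp only [I_mul_theta1_div_eta _ hτ, neg_sub, ← mul_neg, Finset.prod_mul_distrib]
    at pair_prod ⊢
  rw [pair_prod, eta_eq_cexp_mul_nomeProduct]
  simp only [nome, Finset.compl_singleton] at exp_eq factors_eq ⊢
  simp only [WeylKac, Finset.filter_lt_eq_Ioi, Finset.filter_ne', exp_eq, factors_eq]
  ring

end WeylKac

section WeylKacDerivatives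

open scoped Real ModularForm

variable {N : ℕ} {lam : Fin N → ℂ} {τ : ℂ}

lemma hasDerivAt_theta1_mul_rhoF (hτ : 0 < τ.im) {t : ℂ} (ht : theta1 t τ ≠ 0) :
    HasDerivAt (theta1 · τ) (theta1 t τ * rhoF t τ) t := by
  have := hasDerivAt_theta1Deriv 0 t hτ
  simp only [theta1Deriv_zero] at this
  refine this.congr_deriv ?_
  rw [rhoF, mul_div_cancel₀ _ ht, theta1'_eq_theta1Deriv t hτ]

lemma hasDerivAt_theta1_update_sub (hτ : 0 < τ.im) {j l : Fin N}
    (hjl : theta1 (lam j - lam l) τ ≠ 0) (i : Fin N) :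
    HasDerivAt (fun z ↦ theta1 (Function.update lam i z j - Function.update lam i z l) τ)
      (theta1 (lam j - lam l) τ *
        (((Pi.single i 1 : Fin N → ℂ) j - (Pi.single i 1 : Fin N → ℂ) l) *
          rhoF (lam j - lam l) τ)) (lam i) := by
  have coordinate := hasDerivAt_pi.1 (hasDerivAt_update lam i (lam i))
  refine ((hasDerivAt_theta1_mul_rhoF hτ hjl).comp_of_eq (lam i)
    ((coordinate j).fun_sub (coordinate l)) (by rw [Function.update_eq_self])).congr_deriv ?_
  ring

lemma hasDerivAt_weylKac_update (hτ : 0 < τ.im)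
    (hlam : ∀ j l, j ≠ l → theta1 (lam j - lam l) τ ≠ 0) (i : Fin N) :
    HasDerivAt (fun z ↦ WeylKac N (Function.update lam i z) τ)
      (WeylKac N lam τ * ∑ l, rhoF (lam i - lam l) τ) (lam i) := by
  have pair (j l : Fin N) (hjl : j < l) := ((hasDerivAt_theta1_update_sub hτ
    (hlam j l hjl.ne) i).const_mul I).div_const (η τ)
  have prod := hasDerivAt_finsetProd_of_logDeriv (u := Finset.univ) fun j _ ↦
    hasDerivAt_finsetProd_of_logDeriv (u := Finset.Ioi j) (x := lam i)
      (f := fun l z ↦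
        I * theta1 (Function.update lam i z j - Function.update lam i z l) τ / η τ)
      (L := fun l ↦ ((Pi.single i 1 : Fin N → ℂ) j - (Pi.single i 1 : Fin N → ℂ) l) *
        rhoF (lam j - lam l) τ)
      fun l hl ↦ (pair j l (Finset.mem_Ioi.1 hl)).congr_deriv <| by
        simp only [Function.update_eq_self]
        ring
  simp only [weylKac_eq_eta_pow_mul_prod _ hτ]
  refine (prod.const_mul (η τ ^ (N - 1))).congr_deriv ?_
  rw [sum_sum_Ioi_single_sub_single_mul (r := fun j l ↦ rhoF (lam j - lam l) τ)
    (fun j l ↦ by rw [← neg_sub, rhoF_neg _ hτ]) (fun j ↦ by rw [sub_self, rhoF_zero]) i]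
  simp only [Function.update_eq_self, mul_assoc]

lemma eventually_theta1_update_sub_ne_zero (hτ : 0 < τ.im)
    (hlam : ∀ j l, j ≠ l → theta1 (lam j - lam l) τ ≠ 0) (i : Fin N) :
    ∀ᶠ z in 𝓝 (lam i), ∀ j l, j ≠ l →
      theta1 (Function.update lam i z j - Function.update lam i z l) τ ≠ 0 := by
  simp only [eventually_all]
  intro j l hjl
  refine (hasDerivAt_theta1_update_sub hτ (hlam j l hjl) i).continuousAt.eventually_ne ?_
  rw [Function.update_eq_self]
  exact hlam j l hjl

lemma hasDerivAt_sum_rhoF_update_sub (hτ : 0 < τ.im)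
    (hlam : ∀ j l, j ≠ l → theta1 (lam j - lam l) τ ≠ 0) (i : Fin N) :
    HasDerivAt
      (fun z ↦ ∑ l, rhoF (Function.update lam i z i - Function.update lam i z l) τ)
      (∑ l, rhoDeriv (lam i - lam l) τ) (lam i) := by
  refine HasDerivAt.fun_sum fun l _ ↦ ?_
  rcases eq_or_ne l i with rfl | hli
  · simpa only [sub_self, rhoDeriv_zero] using hasDerivAt_const (lam l) (rhoF 0 τ)
  · simpa only [Function.update_self, Function.update_of_ne hli] using
      (hasDerivAt_rhoF hτ (hlam i l hli.symm)).comp_sub_const (lam i) (lam l)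

theorem deriv_deriv_weylKac_update_pow (n : ℕ) (hτ : 0 < τ.im)
    (hlam : ∀ j l, j ≠ l → theta1 (lam j - lam l) τ ≠ 0) (i : Fin N) :
    deriv (deriv fun z ↦ WeylKac N (Function.update lam i z) τ ^ n) (lam i) =
      WeylKac N lam τ ^ n *
        (n ^ 2 * (∑ l, rhoF (lam i - lam l) τ) ^ 2 + n * ∑ l, rhoDeriv (lam i - lam l) τ) := by
  have eventually_hasDerivAt : ∀ᶠ z in 𝓝 (lam i),
      HasDerivAt (fun z ↦ WeylKac N (Function.update lam i z) τ)
        (WeylKac N (Function.update lam i z) τ *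
          ∑ l, rhoF (Function.update lam i z i - Function.update lam i z l) τ) z := by
    filter_upwards [eventually_theta1_update_sub_ne_zero hτ hlam i] with z hz
    simpa only [Function.update_idem, Function.update_self] using hasDerivAt_weylKac_update hτ hz i
  rw [deriv_deriv_pow_of_logDeriv n eventually_hasDerivAt
    (hasDerivAt_sum_rhoF_update_sub hτ hlam i), Function.update_eq_self]

lemma hasDerivAt_theta1_div_eta_tau (hτ : 0 < τ.im) {t : ℂ} (ht : theta1 t τ ≠ 0) :
    HasDerivAt (fun w ↦ I * theta1 t w / η w) (I * theta1 t τ / η τ *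
      ((rhoF t τ ^ 2 + rhoDeriv t τ - theta1Deriv 3 0 τ / theta1Deriv 1 0 τ / 3) /
        (4 * π * I))) τ := by
  have heat := hasDerivAt_theta1Deriv_tau 0 t hτ
  have eta_ne := ModularForm.eta_ne_zero hτ
  simp only [funext (theta1Deriv_zero t)] at heat
  refine ((heat.const_mul I).fun_div (hasDerivAt_eta hτ) eta_ne).congr_deriv ?_
  rw [rhoDeriv]
  generalize theta1Deriv 3 0 τ / theta1Deriv 1 0 τ = C
  have := Real.pi_ne_zero
  field_simp
  ring

lemma hasDerivAt_weylKac_tau_sum_pairs (hτ : 0 < τ.im)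
    (hlam : ∀ j l, j ≠ l → theta1 (lam j - lam l) τ ≠ 0) :
    HasDerivAt (WeylKac N lam) (WeylKac N lam τ *
      ((N - 1 : ℕ) * (theta1Deriv 3 0 τ / theta1Deriv 1 0 τ / (12 * π * I)) +
        ∑ j, ∑ l ∈ Finset.Ioi j, (rhoF (lam j - lam l) τ ^ 2 + rhoDeriv (lam j - lam l) τ -
          theta1Deriv 3 0 τ / theta1Deriv 1 0 τ / 3) / (4 * π * I))) τ := by
  have prod := hasDerivAt_finsetProd_of_logDeriv (u := Finset.univ) fun j _ ↦
    hasDerivAt_finsetProd_of_logDeriv (u := Finset.Ioi j) fun l hl ↦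
      hasDerivAt_theta1_div_eta_tau hτ (hlam j l (Finset.mem_Ioi.1 hl).ne)
  have eta_pow := hasDerivAt_pow_of_logDeriv (N - 1) (hasDerivAt_eta hτ)
  refine ((eta_pow.fun_mul prod).congr_of_eventuallyEq
    ((eventually_im_pos hτ).mono fun w hw ↦ weylKac_eq_eta_pow_mul_prod lam hw)).congr_deriv ?_
  rw [weylKac_eq_eta_pow_mul_prod lam hτ]
  ring

lemma sum_sq_sum_rhoF_add_sum_rhoDeriv (hτ : 0 < τ.im)
    (hlam : ∀ j l, j ≠ l → ¬ inLattice τ (lam j - lam l)) :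
    ∑ j, (∑ l, rhoF (lam j - lam l) τ) ^ 2 + ∑ j, ∑ l, rhoDeriv (lam j - lam l) τ =
      N * ((N - 1) * (2 - N) / 6 * (theta1Deriv 3 0 τ / theta1Deriv 1 0 τ) +
        (∑ j, ∑ l, (rhoF (lam j - lam l) τ ^ 2 + rhoDeriv (lam j - lam l) τ)) / 2) := by
  have := sum_sq_sum_of_triple_identity (r := fun j l ↦ rhoF (lam j - lam l) τ)
    (s := fun j l ↦ rhoDeriv (lam j - lam l) τ)
    (fun j l ↦ by rw [← neg_sub, rhoF_neg _ hτ]) (fun j ↦ by rw [sub_self, rhoF_zero])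
    (fun j l ↦ by rw [← neg_sub, rhoDeriv_neg _ hτ]) (fun j ↦ by rw [sub_self, rhoDeriv_zero])
    fun i j k hij hjk hki ↦ sq_rhoF_add_rhoF_add_rhoF hτ (by ring) (hlam i j hij) (hlam j k hjk)
      (hlam k i hki)
  rw [Fintype.card_fin] at this
  linear_combination -this / 6

theorem hasDerivAt_weylKac_tau (hN : N ≠ 0) (hτ : 0 < τ.im)
    (hlam : ∀ j l, j ≠ l → ¬ inLattice τ (lam j - lam l)) :
    HasDerivAt (WeylKac N lam) (WeylKac N lam τ *
      ((∑ j, (∑ l, rhoF (lam j - lam l) τ) ^ 2 + ∑ j, ∑ l, rhoDeriv (lam j - lam l) τ) /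
        (4 * π * I * N))) τ := by
  refine (hasDerivAt_weylKac_tau_sum_pairs hτ fun j l hjl ↦
    theta1_ne_zero hτ (hlam j l hjl)).congr_deriv ?_
  rw [sum_sq_sum_rhoF_add_sum_rhoDeriv hτ hlam,
    Nat.cast_sub (Nat.one_le_iff_ne_zero.2 hN), Nat.cast_one, mul_comm (N : ℂ),
    mul_div_mul_right _ _ (Nat.cast_ne_zero.2 hN)]
  simp only [← Finset.sum_div]
  generalize theta1Deriv 3 0 τ / theta1Deriv 1 0 τ = C
  have pair_sum := two_mul_sum_sum_Ioi_add_sum_diag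
    (f := fun j l ↦ rhoF (lam j - lam l) τ ^ 2 + rhoDeriv (lam j - lam l) τ - C / 3)
    fun j l ↦ by rw [← neg_sub (lam j), rhoF_neg _ hτ, rhoDeriv_neg _ hτ, neg_sq]
  simp only [sub_self, rhoF_zero, rhoDeriv_zero, Finset.sum_sub_distrib (s := Finset.univ),
    Finset.sum_const, Finset.card_univ, Fintype.card_fin, nsmul_eq_mul] at pair_sum
  linear_combination (WeylKac N lam τ / (8 * π * I)) * pair_sum

lemma two_mul_sum_sum_deriv_rhoF (hτ : 0 < τ.im)
    (hlam : ∀ j l, j ≠ l → theta1 (lam j - lam l) τ ≠ 0) :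
    2 * ∑ j, ∑ l ∈ Finset.Ioi j, deriv (fun z ↦ rhoF z τ) (lam j - lam l) =
      ∑ j, ∑ l, rhoDeriv (lam j - lam l) τ := by
  have deriv_eq (j l : Fin N) (hl : l ∈ Finset.Ioi j) :
      deriv (fun z ↦ rhoF z τ) (lam j - lam l) = rhoDeriv (lam j - lam l) τ :=
    (hasDerivAt_rhoF hτ (hlam j l (Finset.mem_Ioi.1 hl).ne)).deriv
  have pair_sum := two_mul_sum_sum_Ioi_add_sum_diag (f := fun j l ↦ rhoDeriv (lam j - lam l) τ)
    fun j l ↦ by rw [← neg_sub, rhoDeriv_neg _ hτ]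
  simp only [sub_self, rhoDeriv_zero, Finset.sum_const_zero, add_zero] at pair_sum
  rw [← pair_sum, Fintype.sum_congr _ _ fun j ↦ Finset.sum_congr rfl (deriv_eq j)]

end WeylKacDerivatives

end

/-- `Π^{p+1}` is a horizontal section of the KZB connection:
`4πiN(p+1)·∂_τ(Π^{p+1}) = ∑_j ∂²_{λ_j}(Π^{p+1}) + 2p(p+1)∑_{j<l} ρ'(λ_j−λ_l,τ)·Π^{p+1}`. -/
theorem weylKac_power_horizontal (N p : ℕ) (hN : 2 ≤ N) (τ : ℂ) (hτ : 0 < τ.im)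
    (lam : Fin N → ℂ) (hlam : ∀ j l : Fin N, j ≠ l → ¬ inLattice τ (lam j - lam l)) :
    4 * (Real.pi : ℂ) * Complex.I * (N : ℂ) * ((p : ℂ) + 1) *
        deriv (fun τ' => WeylKac N lam τ' ^ (p + 1)) τ
      = (∑ j : Fin N,
          deriv (deriv (fun z => WeylKac N (Function.update lam j z) τ ^ (p + 1))) (lam j))
        + 2 * (p : ℂ) * ((p : ℂ) + 1) *
            (∑ j : Fin N, ∑ l ∈ Finset.univ.filter (fun l : Fin N => j < l),
              deriv (fun z => rhoF z τ) (lam j - lam l)) * WeylKac N lam τ ^ (p + 1) := by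
  have theta1_ne (j l : Fin N) (hjl : j ≠ l) : theta1 (lam j - lam l) τ ≠ 0 :=
    theta1_ne_zero hτ (hlam j l hjl)
  have hN₀ : N ≠ 0 := Nat.ne_zero_of_lt hN
  have potential := two_mul_sum_sum_deriv_rhoF hτ theta1_ne
  have tau_deriv := (hasDerivAt_pow_of_logDeriv (p + 1) (hasDerivAt_weylKac_tau hN₀ hτ hlam)).deriv
  rw [tau_deriv]
  simp only [deriv_deriv_weylKac_update_pow (p + 1) hτ theta1_ne, ← Finset.mul_sum,
    Finset.sum_add_distrib, Finset.filter_lt_eq_Ioi]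
  push_cast
  have := Real.pi_ne_zero
  have : (N : ℂ) ≠ 0 := Nat.cast_ne_zero.2 hN₀
  field_simp
  linear_combination -(p * WeylKac N lam τ ^ (p + 1)) * potential
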